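/- Every completely normal distributive 0-lattice L with at most ℵ₁ elements is the image of a surjective lattice homomorphism from Idc F for some Abelian ℓ-group F. -/

import Mathlib

universe v

/-- An Abelian `ℓ`-group: an abelian group endowed with a translation-invariant
lattice order. -/
structure AbelianLGroup where
  carrier : Type v
  [lat : Lattice carrier]
  [grp : AddCommGroup carrier]
  add_le_add_left' : ∀ a b : carrier, a ≤ b → ∀ c : carrier, c + a ≤ c + b

attribute [instance] AbelianLGroup.lat AbelianLGroup.grp

/-- The principal `ℓ`-ideal `⟨a⟩ = {x : |x| ≤ n • a for some n ∈ ℕ}` generated by `a`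
(here `|x| = x ⊔ -x`). -/
def principalLIdeal {G : Type*} [Lattice G] [AddCommGroup G] (a : G) : Set G :=
  {x : G | ∃ n : ℕ, x ⊔ -x ≤ n • a}

/-
A map `μ` from a rational vector space `E` to `L` such that `μ u ⊓ μ (-u) = ⊥` and
`μ (u + v) ≤ μ u ⊔ μ v` assigns to `u` a truth value in `L` of the assertion `0 < u`. Each prime
ideal of `L` evaluates these truth values and makes a quotient of `E` a linearly ordered group; in
the product of these groups, the image of `E` generates an `ℓ`-group `F` whose lattice of principal
`ℓ`-ideals maps onto `L` as soon as `μ` does.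

On the free space over `ω₁`, such a `μ` with prescribed values at the basis vectors is built by
transfinite recursion. A step adjoins one basis vector to a space with countably many elements. By
homogeneity it suffices to define `μ` on the affine hyperplanes where the new coordinate is `1` or
`-1`, which amounts to adding a point to a countable set endowed with the Cevian operation
`D u v = μ (u - v)`. The distances to this point are chosen one element of the set at a time:
a distance is bounded above by the shortest path `U` through the elements already treated, the
opposite distance by the shortest path `V`, and complete normality gives disjoint `x` and `y` with
`U ≤ x ⊔ V` and `V ≤ y ⊔ U`, for which `U ⊓ x` and `V ⊓ y` are the required values.
-/

section WellFoundedExtension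

variable {ι T Y : Type*} [LinearOrder ι] [Nonempty Y] {V : ι → Set T}

lemma exists_eqOn_of_coherent {F : ι → T → Y} {s : Set ι}
    (hF : ∀ j ∈ s, ∀ k ∈ s, j < k → Set.EqOn (F j) (F k) (V j)) :
    ∃ f : T → Y, ∀ j ∈ s, Set.EqOn f (F j) (V j) := by
  have hvalue : ∀ t, ∃ y, ∀ j ∈ s, t ∈ V j → y = F j t := by
    intro t
    by_cases ht : ∃ j ∈ s, t ∈ V j
    · obtain ⟨j, hj, htj⟩ := ht
      refine ⟨F j t, fun k hk htk ↦ ?_⟩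
      rcases lt_trichotomy j k with hjk | rfl | hkj
      · exact hF j hj k hk hjk htj
      · rfl
      · exact (hF k hk j hj hkj htk).symm
    · exact ⟨Classical.arbitrary Y, fun j hj htj ↦ (ht ⟨j, hj, htj⟩).elim⟩
  choose f hf using hvalue
  exact ⟨f, fun j hj t ht ↦ hf t j hj ht⟩

theorem exists_forall_of_forall_exists_extension [WellFoundedLT ι] {P : ι → (T → Y) → Prop}
    (hcongr : ∀ i f g, Set.EqOn f g (V i) → P i f → P i g)
    (hext : ∀ i f, (∀ j < i, P j f) → ∃ g, P i g ∧ ∀ j < i, Set.EqOn f g (V j)) :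
    ∃ f, ∀ i, P i f := by
  let F : ι → T → Y := WellFoundedLT.fix fun i F ↦
    Classical.epsilon fun g ↦ P i g ∧ ∀ j (hj : j < i), Set.EqOn (F j hj) g (V j)
  have hF : ∀ i, P i (F i) ∧ ∀ j < i, Set.EqOn (F j) (F i) (V j) := by
    intro i
    induction i using WellFoundedLT.induction with | _ i ih => ?_
    obtain ⟨f, hf⟩ := exists_eqOn_of_coherent (s := Set.Iio i) fun j _ k hk hjk ↦ (ih k hk).2 j hjk
    obtain ⟨g, hg, hfg⟩ := hext i f fun j hj ↦ hcongr j (F j) f (hf j hj).symm (ih j hj).1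
    rw [show F i = _ from WellFoundedLT.fix_eq _ i]
    exact Classical.epsilon_spec
      (p := fun g ↦ P i g ∧ ∀ j, ∀ _ : j < i, Set.EqOn (F j) g (V j))
      ⟨g, hg, fun j hj ↦ (hf j hj).symm.trans (hfg j hj)⟩
  obtain ⟨f, hf⟩ := exists_eqOn_of_coherent (s := Set.univ) fun j _ k _ hjk ↦ (hF k).2 j hjk
  exact ⟨f, fun i ↦ hcongr i (F i) f (hf i trivial).symm (hF i).1⟩

end WellFoundedExtension

section Cevian

variable {H L : Type*}

section Lattice

variable [Lattice L]

/-- `α` is a possible value of `D x' x`, where `D` is a Cevian operation and `x`, `x'` are points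
with `A v = D v x`, `B v = D x v`, `A' v = D v x'` and `B' v = D x' v` for `v ∈ S`. -/
structure IsCevianDiff (A B A' B' : H → L) (α : L) (S : Set H) : Prop where
  left_le : ∀ ⦃v⦄, v ∈ S → A v ≤ A' v ⊔ α
  right_le : ∀ ⦃v⦄, v ∈ S → B' v ≤ α ⊔ B v
  le_sup : ∀ ⦃v⦄, v ∈ S → α ≤ B' v ⊔ A v

variable {A B A' B' : H → L} {S T : Set H}

lemma IsCevianDiff.congr {A₁ B₁ A₁' B₁' : H → L} {α : L} (h : IsCevianDiff A B A' B' α S)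
    (hA : Set.EqOn A A₁ S) (hB : Set.EqOn B B₁ S) (hA' : Set.EqOn A' A₁' S)
    (hB' : Set.EqOn B' B₁' S) : IsCevianDiff A₁ B₁ A₁' B₁' α S where
  left_le _ hv := hA hv ▸ hA' hv ▸ h.left_le hv
  right_le _ hv := hB hv ▸ hB' hv ▸ h.right_le hv
  le_sup _ hv := hA hv ▸ hB' hv ▸ h.le_sup hv

variable [OrderBot L]

/-- `D` is a Cevian operation on `S`: the value `D a b` plays the role of the difference
`a ∖ b` of two elements of a lattice. -/
structure IsCevianOn (D : H → H → L) (S : Set H) : Prop where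
  disjoint : ∀ ⦃a⦄, a ∈ S → ∀ ⦃b⦄, b ∈ S → Disjoint (D a b) (D b a)
  triangle : ∀ ⦃a⦄, a ∈ S → ∀ ⦃b⦄, b ∈ S → ∀ ⦃c⦄, c ∈ S → D a c ≤ D a b ⊔ D b c

/-- `A` and `B` are the values `A v = D v x` and `B v = D x v` at `v ∈ S` of an extension of the
Cevian operation `D` to a further point `x`. -/
structure IsCevianPoint (D : H → H → L) (A B : H → L) (S : Set H) : Prop where
  disjoint : ∀ ⦃v⦄, v ∈ S → Disjoint (A v) (B v)
  left_le : ∀ ⦃v⦄, v ∈ S → ∀ ⦃w⦄, w ∈ S → A v ≤ D v w ⊔ A w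
  right_le : ∀ ⦃v⦄, v ∈ S → ∀ ⦃w⦄, w ∈ S → B w ≤ B v ⊔ D v w
  le_sup : ∀ ⦃v⦄, v ∈ S → ∀ ⦃w⦄, w ∈ S → D v w ≤ A v ⊔ B w

variable {D : H → H → L}

lemma IsCevianOn.self_eq_bot (hD : IsCevianOn D S) {a : H} (ha : a ∈ S) : D a a = ⊥ :=
  disjoint_self.1 (hD.disjoint ha ha)

lemma IsCevianOn.isCevianPoint (hD : IsCevianOn D T) {w : H} (hw : w ∈ T) (hST : S ⊆ T) :
    IsCevianPoint D (D · w) (D w ·) S where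
  disjoint _ hv := hD.disjoint (hST hv) hw
  left_le _ hv _ hv' := hD.triangle (hST hv) (hST hv') hw
  right_le _ hv _ hv' := hD.triangle hw (hST hv) (hST hv')
  le_sup _ hv _ hv' := hD.triangle (hST hv) hw (hST hv')

lemma isCevianPoint_singleton (hD : IsCevianOn D S) {w : H} (hw : w ∈ S)
    (hAB : Disjoint (A w) (B w)) : IsCevianPoint D A B {w} := by
  constructor <;> simp [hAB, hD.self_eq_bot hw]

lemma IsCevianPoint.congr (h : IsCevianPoint D A B S) (hA : Set.EqOn A A' S)
    (hB : Set.EqOn B B' S) : IsCevianPoint D A' B' S where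
  disjoint _ hv := hA hv ▸ hB hv ▸ h.disjoint hv
  left_le _ hv _ hw := hA hv ▸ hA hw ▸ h.left_le hv hw
  right_le _ hv _ hw := hB hv ▸ hB hw ▸ h.right_le hv hw
  le_sup _ hv _ hw := hA hv ▸ hB hw ▸ h.le_sup hv hw

lemma IsCevianPoint.mono (h : IsCevianPoint D A B T) (hST : S ⊆ T) : IsCevianPoint D A B S where
  disjoint _ hv := h.disjoint (hST hv)
  left_le _ hv _ hw := h.left_le (hST hv) (hST hw)
  right_le _ hv _ hw := h.right_le (hST hv) (hST hw)
  le_sup _ hv _ hw := h.le_sup (hST hv) (hST hw)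

lemma IsCevianPoint.iUnion {κ : Type*} {V : κ → Set H} (hV : Directed (· ⊆ ·) V)
    (h : ∀ k, IsCevianPoint D A B (V k)) : IsCevianPoint D A B (⋃ k, V k) := by
  have hpair : ∀ v ∈ ⋃ k, V k, ∀ w ∈ ⋃ k, V k, ∃ k, v ∈ V k ∧ w ∈ V k := by
    simp only [Set.mem_iUnion]
    rintro v ⟨i, hi⟩ w ⟨j, hj⟩
    obtain ⟨k, hik, hjk⟩ := hV i j
    exact ⟨k, hik hi, hjk hj⟩
  refine ⟨fun v hv ↦ ?_, fun v hv w hw ↦ ?_, fun v hv w hw ↦ ?_, fun v hv w hw ↦ ?_⟩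
  · obtain ⟨k, hk⟩ := Set.mem_iUnion.1 hv
    exact (h k).disjoint hk
  all_goals obtain ⟨k, hkv, hkw⟩ := hpair v hv w hw
  · exact (h k).left_le hkv hkw
  · exact (h k).right_le hkv hkw
  · exact (h k).le_sup hkv hkw

lemma IsCevianPoint.insert_of_isCevianDiff (h : IsCevianPoint D A B S) (hD : IsCevianOn D T)
    {w : H} (hw : w ∈ T) (hdisj : Disjoint (A w) (B w))
    (hA : IsCevianDiff A B (D · w) (D w ·) (A w) S)
    (hB : IsCevianDiff (D · w) (D w ·) A B (B w) S) : IsCevianPoint D A B (insert w S) where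
  disjoint := by simpa [hdisj] using h.disjoint
  left_le := by
    rintro v (rfl | hv) v' (rfl | hv')
    · exact le_sup_right
    · exact hA.le_sup hv'
    · exact hA.left_le hv
    · exact h.left_le hv hv'
  right_le := by
    rintro v (rfl | hv) v' (rfl | hv')
    · exact le_sup_left
    · exact hB.right_le hv'
    · exact hB.le_sup hv
    · exact h.right_le hv hv'
  le_sup := by
    rintro v (rfl | hv) v' (rfl | hv')
    · simp [hD.self_eq_bot hw]
    · exact hA.right_le hv'
    · exact hB.left_le hv
    · exact h.le_sup hv hv'

end Lattice

variable [DistribLattice L] [OrderBot L] {D : H → H → L} {A B A' B' : H → L} {S T : Set H}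

/-- Any two elements split modulo each other into disjoint parts: complete normality of a
distributive lattice with least element. -/
def IsCompletelyNormal (L : Type*) [Lattice L] [OrderBot L] : Prop :=
  ∀ a b : L, ∃ x y : L, a ⊔ b = a ⊔ y ∧ a ⊔ b = x ⊔ b ∧ x ⊓ y = ⊥

lemma IsCevianPoint.isCevianDiff_inf {S : Finset H} (hS : S.Nonempty) (h : IsCevianPoint D A B S)
    (h' : IsCevianPoint D A' B' S) {x : L} (hx : S.inf' hS (fun v ↦ B' v ⊔ A v) ≤
      x ⊔ S.inf' hS (fun v ↦ B v ⊔ A' v)) :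
    IsCevianDiff A B A' B' (x ⊓ S.inf' hS (fun v ↦ B' v ⊔ A v)) S := by
  set U := S.inf' hS (fun v ↦ B' v ⊔ A v)
  have hUx : ∀ v ∈ S, U ≤ x ⊔ (B v ⊔ A' v) := fun v hv ↦
    hx.trans (sup_le_sup_left (Finset.inf'_le _ hv) _)
  refine ⟨fun v hv ↦ ?_, fun v hv ↦ ?_, fun v hv ↦ inf_le_right.trans (Finset.inf'_le _ hv)⟩
  · have hAU : A v ≤ A' v ⊔ U := by
      rw [Finset.inf'_sup_distrib_left, Finset.le_inf'_iff]
      intro w hw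
      rw [← sup_assoc]
      exact (h.left_le hv hw).trans (sup_le_sup_right (h'.le_sup hv hw) _)
    have hAx : A v ≤ A' v ⊔ x := (h.disjoint hv).left_le_of_le_sup_right <|
      hAU.trans (sup_le (by order) ((hUx v hv).trans_eq (by ac_rfl)))
    rw [sup_inf_left]
    exact le_inf hAx hAU
  · have hBU : B' v ≤ U ⊔ B v := by
      rw [Finset.inf'_sup_distrib_right, Finset.le_inf'_iff]
      intro w hw
      rw [sup_assoc, sup_comm (A w)]
      exact (h'.right_le hw hv).trans (sup_le_sup_left ((h.le_sup hw hv).trans_eq (sup_comm _ _)) _)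
    have hBx : B' v ≤ x ⊔ B v := (h'.disjoint hv).symm.left_le_of_le_sup_right <|
      hBU.trans (sup_le ((hUx v hv).trans_eq (by ac_rfl)) (by order))
    rw [sup_inf_right]
    exact le_inf hBx hBU

lemma IsCevianPoint.exists_isCevianDiff (hL : IsCompletelyNormal L) (hS : S.Finite)
    (hne : S.Nonempty) (h : IsCevianPoint D A B S) (h' : IsCevianPoint D A' B' S) :
    ∃ α β, Disjoint α β ∧ IsCevianDiff A B A' B' α S ∧ IsCevianDiff A' B' A B β S := by
  lift S to Finset H using hS
  obtain ⟨x, y, hy, hx, hxy⟩ := hL (S.inf' hne fun v ↦ B' v ⊔ A v) (S.inf' hne fun v ↦ B v ⊔ A' v)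
  refine ⟨_, _, ?_, h.isCevianDiff_inf hne h' (le_sup_left.trans_eq hx),
    h'.isCevianDiff_inf hne h (x := y) (le_sup_right.trans_eq (hy.trans (sup_comm _ _)))⟩
  exact (disjoint_iff.2 hxy).mono inf_le_left inf_le_left

lemma IsCevianPoint.exists_insert (hL : IsCompletelyNormal L) (hD : IsCevianOn D T) (hST : S ⊆ T)
    (hS : S.Finite) (hne : S.Nonempty) (h : IsCevianPoint D A B S) {w : H} (hw : w ∈ T) :
    ∃ A' B', Set.EqOn A A' S ∧ Set.EqOn B B' S ∧ IsCevianPoint D A' B' (insert w S) := by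
  classical
  by_cases hwS : w ∈ S
  · exact ⟨A, B, Set.eqOn_refl A S, Set.eqOn_refl B S, by rwa [Set.insert_eq_of_mem hwS]⟩
  obtain ⟨α, β, hdisj, hα, hβ⟩ := h.exists_isCevianDiff hL hS hne (hD.isCevianPoint hw hST)
  have hupdate : ∀ (f : H → L) (a : L), Set.EqOn f (Function.update f w a) S := fun f a v hv ↦
    (Function.update_of_ne (ne_of_mem_of_not_mem hv hwS) a f).symm
  have hA := hupdate A α
  have hB := hupdate B β
  refine ⟨_, _, hA, hB, (h.congr hA hB).insert_of_isCevianDiff hD hw ?_ ?_ ?_⟩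
  · simpa using hdisj
  · rw [Function.update_self]
    exact hα.congr hA hB (Set.eqOn_refl _ S) (Set.eqOn_refl _ S)
  · rw [Function.update_self]
    exact hβ.congr (Set.eqOn_refl _ S) (Set.eqOn_refl _ S) hA hB

theorem IsCevianOn.exists_isCevianPoint (hL : IsCompletelyNormal L) (hD : IsCevianOn D S)
    (hS : S.Countable) {w : H} (hw : w ∈ S) (l : L) :
    ∃ A B, A w = l ∧ IsCevianPoint D A B S := by
  obtain ⟨e, rfl⟩ := hS.exists_eq_range ⟨w, hw⟩
  let V (n : ℕ) : Set H := insert w (e '' Set.Iio n)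
  have hwV : ∀ n, w ∈ V n := fun n ↦ Set.mem_insert w _
  have hVsub : ∀ n, V n ⊆ Set.range e := fun n ↦
    Set.insert_subset hw (Set.image_subset_range e _)
  have hVsucc : ∀ n, V (n + 1) = insert (e n) (V n) := fun n ↦ by
    have hIio : Set.Iio (n + 1) = insert n (Set.Iio n) := Order.Iio_succ_eq_insert n
    simp only [V, hIio, Set.image_insert_eq, Set.insert_comm]
  have hVmono : Monotone V := monotone_nat_of_le_succ fun n ↦ hVsucc n ▸ Set.subset_insert _ _
  let P (n : ℕ) (f : H → L × L) : Prop :=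
    (f w).1 = l ∧ IsCevianPoint D (fun v ↦ (f v).1) (fun v ↦ (f v).2) (V n)
  have hext : ∀ n f, (∀ j < n, P j f) → ∃ g, P n g ∧ ∀ j < n, Set.EqOn f g (V j) := by
    rintro (_ | n) f hf
    · exact ⟨fun _ ↦ (l, ⊥), ⟨rfl, by simpa [V] using isCevianPoint_singleton hD hw (by simp)⟩,
        by simp⟩
    obtain ⟨hfl, hfn⟩ := hf n n.lt_succ_self
    obtain ⟨A, B, hA, hB, hAB⟩ := hfn.exists_insert hL hD (hVsub n)
      (((Set.finite_Iio n).image e).insert w) ⟨w, hwV n⟩ (Set.mem_range_self n)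
    have hfAB : Set.EqOn f (fun v ↦ (A v, B v)) (V n) := fun v hv ↦ Prod.ext (hA hv) (hB hv)
    exact ⟨fun v ↦ (A v, B v), ⟨(hA (hwV n)).symm.trans hfl, hVsucc n ▸ hAB⟩,
      fun j hj ↦ hfAB.mono (hVmono (Nat.lt_succ_iff.1 hj))⟩
  obtain ⟨f, hf⟩ := exists_forall_of_forall_exists_extension (V := V) (P := P)
    (fun n f g hfg hf ↦ ⟨hfg (hwV n) ▸ hf.1, hf.2.congr
      (fun v hv ↦ congrArg Prod.fst (hfg hv)) fun v hv ↦ congrArg Prod.snd (hfg hv)⟩) hext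
  have hV : Set.range e ⊆ ⋃ n, V n := by
    rintro _ ⟨n, rfl⟩
    exact Set.mem_iUnion.2 ⟨n + 1, hVsucc n ▸ Set.mem_insert _ _⟩
  exact ⟨_, _, (hf 0).1, (IsCevianPoint.iUnion hVmono.directed_le fun n ↦ (hf n).2).mono hV⟩

end Cevian

section SignValuation

/-- `μ` is a sign valuation on `W`: the value `μ u` plays the role of the truth value of `0 < u`
in a lattice of truth values. -/
structure IsSignValuation {E L : Type*} [AddGroup E] [Lattice L] [OrderBot L] (μ : E → L)
    (W : Set E) : Prop where
  disjoint : ∀ ⦃u⦄, u ∈ W → Disjoint (μ u) (μ (-u))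
  add_le : ∀ ⦃u⦄, u ∈ W → ∀ ⦃v⦄, v ∈ W → μ (u + v) ≤ μ u ⊔ μ v

variable {E L : Type*}

namespace IsSignValuation

section AddGroup

variable [AddGroup E] [Lattice L] [OrderBot L] {μ ν : E → L} {V W : Set E}

lemma mono (h : IsSignValuation μ W) (hVW : V ⊆ W) : IsSignValuation μ V where
  disjoint _ hu := h.disjoint (hVW hu)
  add_le _ hu _ hv := h.add_le (hVW hu) (hVW hv)

lemma map_zero (h : IsSignValuation μ W) (hW : 0 ∈ W) : μ 0 = ⊥ := by
  simpa using h.disjoint hW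

lemma congr {σ : Type*} [SetLike σ E] [AddSubgroupClass σ E] {W : σ}
    (h : IsSignValuation μ (W : Set E)) (hμν : Set.EqOn μ ν W) : IsSignValuation ν (W : Set E) where
  disjoint _ hu := hμν hu ▸ hμν (neg_mem hu) ▸ h.disjoint hu
  add_le _ hu _ hv := hμν hu ▸ hμν hv ▸ hμν (add_mem hu hv) ▸ h.add_le hu hv

lemma iUnion {κ : Type*} {V : κ → Set E} (hV : Directed (· ⊆ ·) V)
    (h : ∀ k, IsSignValuation μ (V k)) : IsSignValuation μ (⋃ k, V k) := by
  refine ⟨fun u hu ↦ ?_, fun u hu v hv ↦ ?_⟩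
  · obtain ⟨i, hi⟩ := Set.mem_iUnion.1 hu
    exact (h i).disjoint hi
  · obtain ⟨i, hi⟩ := Set.mem_iUnion.1 hu
    obtain ⟨j, hj⟩ := Set.mem_iUnion.1 hv
    obtain ⟨k, hik, hjk⟩ := hV i j
    exact (h k).add_le (hik hi) (hjk hj)

lemma isCevianOn (h : IsSignValuation μ W) (hVW : ∀ u ∈ V, ∀ v ∈ V, u - v ∈ W) :
    IsCevianOn (fun u v ↦ μ (u - v)) V where
  disjoint u hu v hv := by simpa using h.disjoint (hVW u hu v hv)
  triangle u hu v hv w hw := by simpa using h.add_le (hVW u hu v hv) (hVW v hv w hw)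

end AddGroup

section Smul

variable [AddCommGroup E] [DistribLattice L] [OrderBot L] {μ : E → L}

lemma map_nsmul_le {σ : Type*} [SetLike σ E] [AddSubgroupClass σ E] {W : σ}
    (h : IsSignValuation μ (W : Set E)) {u : E} (hu : u ∈ W) (n : ℕ) : μ (n • u) ≤ μ u := by
  induction n with
  | zero => simp [h.map_zero (zero_mem W)]
  | succ n ih =>
    rw [succ_nsmul]
    exact (h.add_le (nsmul_mem hu n) hu).trans (sup_le ih le_rfl)

lemma map_nsmul {σ : Type*} [SetLike σ E] [AddSubgroupClass σ E] {W : σ}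
    (h : IsSignValuation μ (W : Set E)) {u : E} (hu : u ∈ W) {n : ℕ} (hn : n ≠ 0) :
    μ (n • u) = μ u := by
  obtain ⟨m, rfl⟩ := Nat.exists_eq_succ_of_ne_zero hn
  refine le_antisymm (h.map_nsmul_le hu _) ((h.disjoint hu).left_le_of_le_sup_right ?_)
  calc μ u = μ ((m + 1) • u + m • -u) := by rw [succ_nsmul', smul_neg, add_neg_cancel_right]
    _ ≤ μ ((m + 1) • u) ⊔ μ (m • -u) := h.add_le (nsmul_mem hu _) (nsmul_mem (neg_mem hu) _)
    _ ≤ μ ((m + 1) • u) ⊔ μ (-u) := sup_le_sup_left (h.map_nsmul_le (neg_mem hu) m) _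

lemma map_rat_smul [Module ℚ E] {W : Submodule ℚ E} (h : IsSignValuation μ (W : Set E)) {q : ℚ}
    (hq : 0 < q) {u : E} (hu : u ∈ W) : μ (q • u) = μ u := by
  have hnum : (q.den : ℚ) * q = (q.num.toNat : ℕ) := by
    rw [Rat.den_mul_eq_num]
    exact_mod_cast (Int.toNat_of_nonneg (Rat.num_pos.2 hq).le).symm
  calc μ (q • u) = μ (q.den • q • u) := (h.map_nsmul (W.smul_mem q hu) q.den_ne_zero).symm
    _ = μ (q.num.toNat • u) := by
      rw [← Nat.cast_smul_eq_nsmul ℚ, smul_smul, hnum, Nat.cast_smul_eq_nsmul]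
    _ = μ u := h.map_nsmul hu (by simpa using hq)

end Smul

section LinearForm

variable {K : Type*} [Field K] [LinearOrder K] [IsStrictOrderedRing K] [AddCommGroup E] [Module K E]
  [DistribLattice L] [OrderBot L] {c : E →ₗ[K] K} {W : Submodule K E} {μ ν : E → L}

/-- Subadditivity may be tested on the triangles with a side in the hyperplane `c = 0`, because a
triangle is cut by this hyperplane into triangles of that kind. -/
lemma of_add_le_of_eq_zero (hsmul : ∀ q : K, 0 < q → ∀ u ∈ W, ν (q • u) = ν u)
    (hdisj : ∀ u ∈ W, Disjoint (ν u) (ν (-u)))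
    (hadd : ∀ u ∈ W, ∀ v ∈ W, c u = 0 ∨ c v = 0 ∨ c (u + v) = 0 → ν (u + v) ≤ ν u ⊔ ν v) :
    IsSignValuation ν (W : Set E) := by
  have hle : ∀ {d x z : E} {a b : K}, d ∈ W → x ∈ W → z ∈ W → 0 < a → 0 < b → c d = 0 →
      b • z = d + a • x → ν z ≤ ν d ⊔ ν x := by
    intro d x z a b hd hx hz ha hb hcd hz'
    rw [← hsmul a ha x hx, ← hsmul b hb z hz, hz']
    exact hadd d hd _ (W.smul_mem a hx) (Or.inl hcd)
  refine ⟨fun u hu ↦ hdisj u hu, fun u hu v hv ↦ ?_⟩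
  by_cases hcu : c u = 0
  · exact hadd u hu v hv (Or.inl hcu)
  by_cases hcv : c v = 0
  · exact hadd u hu v hv (Or.inr (Or.inl hcv))
  have huv : u + v ∈ W := W.add_mem hu hv
  obtain ⟨q, hq⟩ : ∃ q, q * c v = -c u := ⟨-c u / c v, div_mul_cancel₀ _ hcv⟩
  have hd : u + q • v ∈ W := W.add_mem hu (W.smul_mem q hv)
  have hcd : c (u + q • v) = 0 := by simp [hq]
  have hleft : q < 1 → ν (u + v) ≤ ν (u + q • v) ⊔ ν v := fun hq₁ ↦
    hle hd hv huv (sub_pos.2 hq₁) one_pos hcd (by module)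
  rcases lt_trichotomy q 0 with hq₀ | rfl | hq₀
  · have hright : ν (u + v) ≤ ν (-(u + q • v)) ⊔ ν u :=
      hle (W.neg_mem hd) hu huv (a := 1 - q) (by linarith) (neg_pos.2 hq₀) (by simp [hq])
        (by module)
    calc ν (u + v) ≤ (ν (u + q • v) ⊔ (ν u ⊔ ν v)) ⊓ (ν (-(u + q • v)) ⊔ (ν u ⊔ ν v)) :=
          le_inf ((hleft (hq₀.trans one_pos)).trans (sup_le_sup_left le_sup_right _))
            (hright.trans (sup_le_sup_left le_sup_left _))
      _ = ν u ⊔ ν v := by rw [← sup_inf_right, (hdisj _ hd).eq_bot, bot_sup_eq]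
  · simp_all
  · have hd_le : ν (u + q • v) ≤ ν u ⊔ ν v := by
      rw [← hsmul q hq₀ v hv]
      exact hadd u hu _ (W.smul_mem q hv) (Or.inr (Or.inr hcd))
    rcases lt_trichotomy q 1 with hq₁ | rfl | hq₁
    · exact (hleft hq₁).trans (sup_le hd_le le_sup_right)
    · rwa [one_smul] at hd_le
    · exact (hle hd hu huv (sub_pos.2 hq₁) hq₀ hcd (by module)).trans (sup_le hd_le le_sup_left)

lemma add_le_of_isCevianPoint_of_mem_ker (hsmul : ∀ q : K, 0 < q → ∀ u ∈ W, ν (q • u) = ν u)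
    (hker : IsSignValuation ν (W ⊓ c.ker : Submodule K E))
    (hν : IsCevianPoint (fun u v ↦ ν (u - v)) ν (fun u ↦ ν (-u)) {u ∈ W | c u = 1})
    {u v : E} (hu : u ∈ W) (hv : v ∈ W) (hcu : c u = 0) : ν (u + v) ≤ ν u ⊔ ν v := by
  rcases lt_trichotomy (c v) 0 with hcv | hcv | hcv
  · have hq : 0 < -(c v)⁻¹ := by simpa using hcv
    rw [← hsmul _ hq u hu, ← hsmul _ hq v hv, ← hsmul _ hq _ (W.add_mem hu hv), smul_add]
    have hv' := W.smul_mem (-(c v)⁻¹) hv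
    simpa [sup_comm] using hν.right_le (v := -(-(c v)⁻¹ • v)) ⟨W.neg_mem hv', by simp [hcv.ne]⟩
      (w := -(-(c v)⁻¹ • u + -(c v)⁻¹ • v))
      ⟨W.neg_mem (W.add_mem (W.smul_mem _ hu) hv'), by simp [hcu, hcv.ne]⟩
  · exact hker.add_le ⟨hu, hcu⟩ ⟨hv, hcv⟩
  · have hq : 0 < (c v)⁻¹ := inv_pos.2 hcv
    rw [← hsmul _ hq u hu, ← hsmul _ hq v hv, ← hsmul _ hq _ (W.add_mem hu hv), smul_add]
    have hv' := W.smul_mem (c v)⁻¹ hv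
    simpa using hν.left_le (v := (c v)⁻¹ • u + (c v)⁻¹ • v)
      ⟨W.add_mem (W.smul_mem _ hu) hv', by simp [hcu, hcv.ne']⟩
      (w := (c v)⁻¹ • v) ⟨hv', by simp [hcv.ne']⟩

/-- The origin, seen as a further point over the affine hyperplane `c = 1`, controls the sign
valuation off the hyperplane `c = 0`. -/
lemma of_isCevianPoint (hsmul : ∀ q : K, 0 < q → ∀ u ∈ W, ν (q • u) = ν u)
    (hker : IsSignValuation ν (W ⊓ c.ker : Submodule K E))
    (hν : IsCevianPoint (fun u v ↦ ν (u - v)) ν (fun u ↦ ν (-u)) {u ∈ W | c u = 1}) :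
    IsSignValuation ν (W : Set E) := by
  have hdisj_pos : ∀ u ∈ W, 0 < c u → Disjoint (ν u) (ν (-u)) := by
    intro u hu hcu
    rw [← hsmul _ (inv_pos.2 hcu) u hu, ← hsmul _ (inv_pos.2 hcu) (-u) (W.neg_mem hu), smul_neg]
    exact hν.disjoint ⟨W.smul_mem _ hu, by simp [hcu.ne']⟩
  have hadd_opp : ∀ u ∈ W, ∀ v ∈ W, 0 < c u → c (u + v) = 0 → ν (u + v) ≤ ν u ⊔ ν v := by
    intro u hu v hv hcu huv
    have hcv : c v = -c u := (neg_eq_of_add_eq_zero_right (by rwa [← map_add])).symm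
    have hq : 0 < (c u)⁻¹ := inv_pos.2 hcu
    rw [← hsmul _ hq u hu, ← hsmul _ hq v hv, ← hsmul _ hq _ (W.add_mem hu hv), smul_add]
    simpa using hν.le_sup (v := (c u)⁻¹ • u) ⟨W.smul_mem _ hu, by simp [hcu.ne']⟩
      (w := -((c u)⁻¹ • v)) ⟨W.neg_mem (W.smul_mem _ hv), by simp [hcv, hcu.ne']⟩
  have hadd_ker : ∀ u ∈ W, ∀ v ∈ W, c u = 0 → ν (u + v) ≤ ν u ⊔ ν v := fun u hu v hv ↦
    add_le_of_isCevianPoint_of_mem_ker hsmul hker hν hu hv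
  refine of_add_le_of_eq_zero (c := c) hsmul (fun u hu ↦ ?_) fun u hu v hv h ↦ ?_
  · rcases lt_trichotomy (c u) 0 with hcu | hcu | hcu
    · simpa using (hdisj_pos (-u) (W.neg_mem hu) (by simpa using hcu)).symm
    · exact hker.disjoint ⟨hu, hcu⟩
    · exact hdisj_pos u hu hcu
  · rcases h with hcu | hcv | huv
    · exact hadd_ker u hu v hv hcu
    · rw [add_comm, sup_comm]
      exact hadd_ker v hv u hu hcv
    · rcases lt_trichotomy (c u) 0 with hcu | hcu | hcu
      · rw [add_comm, sup_comm]
        exact hadd_opp v hv u hu (by rw [map_add] at huv; linarith) (by rwa [add_comm])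
      · exact hadd_ker u hu v hv hcu
      · exact hadd_opp u hu v hv hcu huv

lemma exists_eqOn_of_isCevianPoint {A B : E → L}
    (hμ : IsSignValuation μ (W ⊓ c.ker : Submodule K E))
    (hsmul : ∀ q : K, 0 < q → ∀ u ∈ W ⊓ c.ker, μ (q • u) = μ u)
    (hAB : IsCevianPoint (fun u v ↦ μ (u - v)) A B {u ∈ W | c u = 1}) :
    ∃ ν, IsSignValuation ν (W : Set E) ∧ Set.EqOn μ ν c.ker ∧ ∀ u, c u = 1 → ν u = A u := by
  let ν (u : E) : L :=
    if c u = 0 then μ u else if 0 < c u then A ((c u)⁻¹ • u) else B ((c u)⁻¹ • u)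
  have hν_zero : ∀ u, c u = 0 → ν u = μ u := fun u hu ↦ if_pos hu
  have hν_one : ∀ u, c u = 1 → ν u = A u := fun u hu ↦ by simp [ν, hu]
  have hν_neg_one : ∀ u, c u = 1 → ν (-u) = B u := fun u hu ↦ by simp [ν, hu, inv_neg]
  have hν_smul : ∀ q : K, 0 < q → ∀ u ∈ W, ν (q • u) = ν u := by
    intro q hq u hu
    by_cases hcu : c u = 0
    · rw [hν_zero u hcu, hν_zero (q • u) (by simp [hcu]), hsmul q hq u ⟨hu, hcu⟩]
    · have hnormal : (c (q • u))⁻¹ • q • u = (c u)⁻¹ • u := by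
        rw [map_smul, smul_eq_mul, mul_inv, smul_smul, mul_right_comm, inv_mul_cancel₀ hq.ne',
          one_mul]
      simp only [ν, hnormal]
      simp [hcu, hq, hq.ne']
  refine ⟨ν, of_isCevianPoint (c := c) hν_smul ?_ ?_, fun u hu ↦ (hν_zero u hu).symm, hν_one⟩
  · exact hμ.congr fun u hu ↦ (hν_zero u hu.2).symm
  · exact
      { disjoint u hu := by simpa only [hν_one u hu.2, hν_neg_one u hu.2] using hAB.disjoint hu
        left_le u hu v hv := by
          simpa only [hν_one, hν_zero, map_sub, sub_self, hu.2, hv.2] using hAB.left_le hu hv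
        right_le u hu v hv := by
          simpa only [hν_neg_one, hν_zero, map_sub, sub_self, hu.2, hv.2] using hAB.right_le hu hv
        le_sup u hu v hv := by
          simpa only [hν_one, hν_neg_one, hν_zero, map_sub, sub_self, hu.2, hv.2] using
            hAB.le_sup hu hv }

end LinearForm

theorem exists_eqOn_ker_of_countable [AddCommGroup E] [Module ℚ E] [DistribLattice L] [OrderBot L]
    (hL : IsCompletelyNormal L) {c : E →ₗ[ℚ] ℚ} {W : Submodule ℚ E} (hW : (W : Set E).Countable)
    {μ : E → L} (hμ : IsSignValuation μ (W ⊓ c.ker : Submodule ℚ E)) {e : E} (he : e ∈ W)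
    (hce : c e = 1) (l : L) :
    ∃ ν, IsSignValuation ν (W : Set E) ∧ Set.EqOn μ ν c.ker ∧ ν e = l := by
  have hD : IsCevianOn (fun u v ↦ μ (u - v)) {u ∈ W | c u = 1} :=
    hμ.isCevianOn fun u hu v hv ↦ ⟨W.sub_mem hu.1 hv.1, by simp [hu.2, hv.2]⟩
  obtain ⟨A, B, hA, hAB⟩ := hD.exists_isCevianPoint hL (hW.mono (Set.sep_subset _ _)) ⟨he, hce⟩ l
  obtain ⟨ν, hν, hμν, hνA⟩ :=
    exists_eqOn_of_isCevianPoint hμ (fun q hq u hu ↦ hμ.map_rat_smul hq hu) hAB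
  exact ⟨ν, hν, hμν, (hνA e hce).trans hA⟩

end IsSignValuation

section Supported

variable {ι R M : Type*} [Ring R] [AddCommGroup M] [Module R M]

lemma countable_supported [Countable M] {s : Set ι} (hs : s.Countable) :
    (Finsupp.supported M R s : Set (ι →₀ M)).Countable := by
  have : Countable s := hs.to_subtype
  exact Set.countable_coe_iff.1
    ((Finsupp.supportedEquivFinsupp (R := R) s).toEquiv.countable_iff.2 inferInstance)

variable [LinearOrder ι]

lemma supported_Iic_inf_ker_lapply_le (i : ι) :
    Finsupp.supported M R (Set.Iic i) ⊓ (Finsupp.lapply i : (ι →₀ M) →ₗ[R] M).ker ≤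
      Finsupp.supported M R (Set.Iio i) := by
  rintro u ⟨hu, hui⟩ k hk
  refine lt_of_le_of_ne (hu hk) ?_
  rintro rfl
  exact Finsupp.mem_support_iff.1 hk hui

lemma exists_isSignValuation_supported [Lattice L] [OrderBot L] {s : Set ι} (hs : IsLowerSet s)
    {μ : (ι →₀ M) → L}
    (hμ : ∀ i ∈ s, IsSignValuation μ (Finsupp.supported M R (Set.Iic i) : Set (ι →₀ M))) :
    ∃ ν, IsSignValuation ν (Finsupp.supported M R s : Set (ι →₀ M)) ∧
      ∀ i ∈ s, Set.EqOn μ ν (Finsupp.supported M R (Set.Iic i)) := by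
  rcases s.eq_empty_or_nonempty with rfl | hne
  · exact ⟨fun _ ↦ ⊥, ⟨by simp, by simp⟩, by simp⟩
  have : Nonempty s := hne.to_subtype
  have hmono : Monotone fun i : s ↦ Finsupp.supported M R (Set.Iic (i : ι)) := fun i j hij ↦
    Finsupp.supported_mono (Set.Iic_subset_Iic.2 hij)
  have hs_eq : s = ⋃ i : s, Set.Iic (i : ι) := by
    ext i
    simp only [Set.mem_iUnion, Set.mem_Iic]
    exact ⟨fun hi ↦ ⟨⟨i, hi⟩, le_rfl⟩, fun ⟨j, hij⟩ ↦ hs hij j.2⟩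
  refine ⟨μ, ?_, fun i _ ↦ Set.eqOn_refl μ _⟩
  rw [hs_eq, Finsupp.supported_iUnion, Submodule.coe_iSup_of_directed _ hmono.directed_le]
  exact IsSignValuation.iUnion hmono.directed_le fun i ↦ hμ i i.2

end Supported

theorem exists_isSignValuation_single {ι : Type*} [LinearOrder ι] [WellFoundedLT ι]
    (hι : ∀ i : ι, (Set.Iio i).Countable) [DistribLattice L] [OrderBot L]
    (hL : IsCompletelyNormal L) (l : ι → L) :
    ∃ μ : (ι →₀ ℚ) → L, IsSignValuation μ Set.univ ∧ ∀ i, μ (Finsupp.single i 1) = l i := by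
  let V (i : ι) := Finsupp.supported ℚ ℚ (Set.Iic i)
  have hsingle : ∀ i, Finsupp.single i 1 ∈ V i := fun i ↦
    Finsupp.single_mem_supported ℚ 1 Set.self_mem_Iic
  have hcount : ∀ i, (V i : Set (ι →₀ ℚ)).Countable := fun i ↦
    countable_supported (Set.Iio_insert (a := i) ▸ (hι i).insert i)
  have hext : ∀ i μ, (∀ j < i, IsSignValuation μ (V j : Set (ι →₀ ℚ)) ∧ μ (.single j 1) = l j) →
      ∃ ν, (IsSignValuation ν (V i : Set (ι →₀ ℚ)) ∧ ν (.single i 1) = l i) ∧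
        ∀ j < i, Set.EqOn μ ν (V j) := by
    intro i μ hμ
    obtain ⟨μ', hμ', hμμ'⟩ :=
      exists_isSignValuation_supported (isLowerSet_Iio i) fun j hj ↦ (hμ j hj).1
    obtain ⟨ν, hν, hμ'ν, hνi⟩ := IsSignValuation.exists_eqOn_ker_of_countable hL (hcount i)
      (hμ'.mono (supported_Iic_inf_ker_lapply_le i)) (hsingle i) (by simp) (l i)
    refine ⟨ν, ⟨hν, hνi⟩, fun j hj ↦ (hμμ' j hj).trans (hμ'ν.mono fun u hu ↦ ?_)⟩
    exact Finsupp.notMem_support_iff.1 fun hi ↦ hj.not_ge (hu hi)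
  obtain ⟨μ, hμ⟩ := exists_forall_of_forall_exists_extension (fun i f g hfg hf ↦
    ⟨hf.1.congr hfg, (hfg (hsingle i)).symm.trans hf.2⟩) hext
  obtain ⟨ν, hν, hμν⟩ := exists_isSignValuation_supported isLowerSet_univ fun i _ ↦ (hμ i).1
  rw [Finsupp.supported_univ] at hν
  exact ⟨ν, hν, fun i ↦ (hμν i trivial (hsingle i)).symm.trans (hμ i).2⟩

end SignValuation

section PrimeIdealSupport

/-- The support of `l`: the set of prime ideals of `L` that do not contain `l`. -/
def primeIdealSupport (L : Type*) [DistribLattice L] :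
    LatticeHom L (Set {I : Order.Ideal L // I.IsPrime}) where
  toFun l := {I | l ∉ I.1}
  map_sup' a b := by
    ext I
    simp [imp_iff_not_or]
  map_inf' a b := by
    ext I
    have : a ⊓ b ∈ I.1 ↔ a ∈ I.1 ∨ b ∈ I.1 :=
      ⟨I.2.mem_or_mem, fun h ↦ h.elim (I.1.lower inf_le_left) (I.1.lower inf_le_right)⟩
    simp [this]

lemma le_of_primeIdealSupport_subset {L : Type*} [DistribLattice L] {a b : L}
    (hab : primeIdealSupport L a ⊆ primeIdealSupport L b) : a ≤ b := by
  by_contra hlt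
  obtain ⟨I, hI, hbI, haI⟩ := DistribLattice.prime_ideal_of_disjoint_filter_ideal
    (F := Order.PFilter.principal a) (I := Order.Ideal.principal b)
    (Set.disjoint_left.2 fun x hax hxb ↦ hlt (le_trans hax hxb))
  exact hab (a := ⟨I, hI⟩) (Set.disjoint_left.1 haI (Order.PFilter.mem_principal.2 le_rfl))
    (hbI (Order.Ideal.mem_principal.2 le_rfl))

lemma primeIdealSupport_injective (L : Type*) [DistribLattice L] :
    Function.Injective (primeIdealSupport L) := fun _ _ hab ↦
  le_antisymm (le_of_primeIdealSupport_subset hab.le) (le_of_primeIdealSupport_subset hab.ge)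

lemma primeIdealSupport_bot (L : Type*) [DistribLattice L] [OrderBot L] :
    primeIdealSupport L ⊥ = ∅ :=
  Set.eq_empty_of_forall_notMem fun I hI ↦ hI I.1.bot_mem

end PrimeIdealSupport

section LinearlyOrderedQuotient

variable {E : Type v} [AddCommGroup E]

lemma exists_addMonoidHom_nonneg_iff {P : AddSubmonoid E} (hP : P.IsSpanning) :
    ∃ (G : Type v) (_ : AddCommGroup G) (_ : LinearOrder G) (_ : IsOrderedAddMonoid G) (φ : E →+ G),
      ∀ u, 0 ≤ φ u ↔ u ∈ P := by
  classical
  let q := QuotientAddGroup.mk' P.support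
  have hmem : ∀ u, q u ∈ P.map q ↔ u ∈ P := by
    refine fun u ↦ ⟨?_, AddSubmonoid.mem_map_of_mem q⟩
    rintro ⟨v, hv, hvu⟩
    have hsub : -v + u ∈ P.support := QuotientAddGroup.eq.1 hvu
    simpa using add_mem hv hsub.1
  let C : AddGroupCone (E ⧸ P.support) :=
    { P.map q with
      eq_zero_of_mem_of_neg_mem' := by
        intro x hx hnx
        obtain ⟨u, rfl⟩ := QuotientAddGroup.mk'_surjective _ x
        exact (QuotientAddGroup.eq_zero_iff u).2 ⟨(hmem u).1 hx, (hmem (-u)).1 hnx⟩ }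
  have : HasMemOrNegMem C := ⟨fun x ↦ by
    obtain ⟨u, rfl⟩ := QuotientAddGroup.mk'_surjective _ x
    exact (hP u).imp (hmem u).2 (hmem (-u)).2⟩
  let : LinearOrder (E ⧸ P.support) := LinearOrder.mkOfAddGroupCone C
  refine ⟨E ⧸ P.support, inferInstance, inferInstance, IsOrderedAddMonoid.mkOfCone C, q, fun u ↦ ?_⟩
  rw [← hmem]
  change q u - 0 ∈ P.map q ↔ _
  rw [sub_zero]

lemma IsSignValuation.exists_addMonoidHom_pos_iff {L : Type*} [Lattice L] [OrderBot L] {μ : E → L}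
    (hμ : IsSignValuation μ Set.univ) {I : Order.Ideal L} (hI : I.IsPrime) :
    ∃ (G : Type v) (_ : AddCommGroup G) (_ : LinearOrder G) (_ : IsOrderedAddMonoid G) (φ : E →+ G),
      ∀ u, 0 < φ u ↔ μ u ∉ I := by
  let P : AddSubmonoid E :=
    { carrier := {u | μ (-u) ∈ I}
      zero_mem' := by simp [hμ.map_zero trivial]
      add_mem' := fun {u v} hu hv ↦ by
        change μ (-(u + v)) ∈ I
        rw [neg_add]
        exact I.lower (hμ.add_le trivial trivial) (Order.Ideal.sup_mem hu hv) }
  have hP : P.IsSpanning := fun u ↦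
    hI.mem_or_mem (x := μ (-u)) (y := μ (- -u)) ((hμ.disjoint trivial).eq_bot ▸ I.bot_mem)
  obtain ⟨G, instGroup, instOrder, instOrdered, φ, hφ⟩ := exists_addMonoidHom_nonneg_iff hP
  refine ⟨G, instGroup, instOrder, instOrdered, φ, fun u ↦ ?_⟩
  rw [← not_le, not_iff_not, ← neg_nonneg, ← map_neg, hφ]
  change μ (- -u) ∈ I ↔ _
  rw [neg_neg]

end LinearlyOrderedQuotient

section LatticeOrderedGroup

/-- The sublattice generated by a subgroup of a lattice-ordered abelian group, which is again a
subgroup. -/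
def latticeClosureAddSubgroup {M : Type*} [Lattice M] [AddCommGroup M] [IsOrderedAddMonoid M]
    (H : AddSubgroup M) : AddSubgroup M :=
  have hsup := (isSublattice_latticeClosure (s := (H : Set M))).supClosed
  have hinf := (isSublattice_latticeClosure (s := (H : Set M))).infClosed
  have hsub_left : ∀ c ∈ H, latticeClosure (H : Set M) ⊆ {a | c - a ∈ latticeClosure (H : Set M)} :=
    fun c hc ↦ latticeClosure_min (fun a ha ↦ subset_latticeClosure (H.sub_mem hc ha))
      ⟨fun a ha b hb ↦ by simpa [sub_sup] using hinf ha hb,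
        fun a ha b hb ↦ by simpa [sub_inf] using hsup ha hb⟩
  have hsub : ∀ b ∈ latticeClosure (H : Set M),
      latticeClosure (H : Set M) ⊆ {a | a - b ∈ latticeClosure (H : Set M)} :=
    fun b hb ↦ latticeClosure_min (fun a ha ↦ hsub_left a ha hb)
      ⟨fun a ha b hb ↦ by simpa [sup_sub] using hsup ha hb,
        fun a ha b hb ↦ by simpa [inf_sub] using hinf ha hb⟩
  AddSubgroup.ofSub (latticeClosure (H : Set M)) ⟨0, subset_latticeClosure H.zero_mem⟩
    fun a ha b hb ↦ sub_eq_add_neg a b ▸ hsub b hb ha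

/-- The support of an element of a product of linearly ordered groups: the set of coordinates where
it is positive. -/
def posSupport {X : Type*} (G : X → Type*) [∀ x, LinearOrder (G x)] [∀ x, Zero (G x)] :
    LatticeHom (∀ x, G x) (Set X) where
  toFun a := {x | 0 < a x}
  map_sup' a b := by ext x; simp
  map_inf' a b := by ext x; simp

lemma posSupport_zero {X : Type*} (G : X → Type*) [∀ x, LinearOrder (G x)] [∀ x, Zero (G x)] :
    posSupport G 0 = ∅ := by
  ext x; simp [posSupport]

lemma posSupport_add_subset {X : Type*} {G : X → Type*} [∀ x, LinearOrder (G x)]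
    [∀ x, AddCommGroup (G x)] [∀ x, IsOrderedAddMonoid (G x)] (a b : ∀ x, G x) :
    posSupport G (a + b) ⊆ posSupport G a ∪ posSupport G b := fun _ hx ↦
  or_iff_not_and_not.2 fun h ↦ hx.not_ge (add_nonpos (not_lt.1 h.1) (not_lt.1 h.2))

instance AbelianLGroup.isOrderedAddMonoid (F : AbelianLGroup) : IsOrderedAddMonoid F.carrier where
  add_le_add_left a b hab c := by
    simpa only [add_comm] using F.add_le_add_left' a b hab c

lemma exists_latticeHom_comp_eq {M N L : Type*} [Lattice M] [Lattice N] [Lattice L]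
    (f : LatticeHom M N) {j : LatticeHom L N} (hj : Function.Injective j)
    (hfj : Set.range f ⊆ Set.range j) : ∃ σ : LatticeHom M L, j.comp σ = f := by
  choose σ hσ using fun a ↦ hfj ⟨a, rfl⟩
  exact ⟨⟨⟨σ, fun a b ↦ hj (by simp [hσ])⟩, fun a b ↦ hj (by simp [hσ])⟩, LatticeHom.ext hσ⟩

theorem IsSignValuation.exists_abelianLGroup {E L : Type v} [AddCommGroup E] [DistribLattice L]
    [OrderBot L] {μ : E → L} (hμ : IsSignValuation μ Set.univ) :
    ∃ (F : AbelianLGroup.{v}) (ι : E → F.carrier) (σ : LatticeHom F.carrier L),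
      σ 0 = ⊥ ∧ (∀ a b, σ (a + b) ≤ σ a ⊔ σ b) ∧ ∀ u, σ (ι u) = μ u := by
  choose G instGroup instOrder instOrdered φ hφ using
    fun I : {I : Order.Ideal L // I.IsPrime} ↦ hμ.exists_addMonoidHom_pos_iff I.2
  let Φ : E →+ ∀ I, G I := AddMonoidHom.pi φ
  let S := latticeClosureAddSubgroup Φ.range
  have hS : IsSublattice (S : Set (∀ I, G I)) := isSublattice_latticeClosure
  let : Lattice S := Subtype.lattice (fun _ _ ha hb ↦ hS.supClosed ha hb)
    fun _ _ ha hb ↦ hS.infClosed ha hb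
  let F : AbelianLGroup.{v} := ⟨S, fun a b hab c ↦ add_le_add_right (α := ∀ I, G I) hab c.1⟩
  let incl : LatticeHom F.carrier (∀ I, G I) := ⟨⟨Subtype.val, fun _ _ ↦ rfl⟩, fun _ _ ↦ rfl⟩
  have hΦ : ∀ u, posSupport G (Φ u) = primeIdealSupport L (μ u) := fun u ↦
    Set.ext fun I ↦ hφ I u
  have hrange : Set.range ((posSupport G).comp incl) ⊆ Set.range (primeIdealSupport L) := by
    rintro _ ⟨a, rfl⟩
    refine latticeClosure_min (t := posSupport G ⁻¹' Set.range (primeIdealSupport L)) ?_ ?_ a.2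
    · rintro _ ⟨u, rfl⟩
      exact ⟨μ u, (hΦ u).symm⟩
    · exact (Set.image_univ (f := primeIdealSupport L) ▸ isSublattice_univ.image _).preimage _
  obtain ⟨σ, hσ⟩ := exists_latticeHom_comp_eq _ (primeIdealSupport_injective L) hrange
  have hσ_apply : ∀ a, primeIdealSupport L (σ a) = posSupport G (incl a) := DFunLike.congr_fun hσ
  refine ⟨F, fun u ↦ ⟨Φ u, subset_latticeClosure ⟨u, rfl⟩⟩, σ, ?_, fun a b ↦ ?_, fun u ↦ ?_⟩
  · apply primeIdealSupport_injective L
    rw [hσ_apply, primeIdealSupport_bot]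
    exact posSupport_zero G
  · apply le_of_primeIdealSupport_subset
    rw [map_sup, hσ_apply, hσ_apply, hσ_apply]
    exact posSupport_add_subset (incl a) (incl b)
  · exact primeIdealSupport_injective L ((hσ_apply _).trans (hΦ u))

end LatticeOrderedGroup

section PrincipalIdeal

variable {F : Type*} [Lattice F] [AddCommGroup F] [IsOrderedAddMonoid F]

lemma exists_le_nsmul_of_principalLIdeal_eq {a b : F} (ha : 0 ≤ a)
    (hab : principalLIdeal a = principalLIdeal b) : ∃ n : ℕ, a ≤ n • b := by
  have hself : a ∈ principalLIdeal a := ⟨1, by simp [(neg_nonpos.2 ha).trans ha]⟩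
  obtain ⟨n, hn⟩ : a ∈ principalLIdeal b := hab ▸ hself
  exact ⟨n, le_sup_left.trans hn⟩

theorem exists_forall_principalLIdeal_eq {L : Type*} [Lattice L] [OrderBot L] (σ : LatticeHom F L)
    (hzero : σ 0 = ⊥) (hadd : ∀ a b, σ (a + b) ≤ σ a ⊔ σ b) :
    ∃ g : Set F → L, ∀ a, 0 ≤ a → g (principalLIdeal a) = σ a := by
  have hnsmul : ∀ (n : ℕ) (a : F), σ (n • a) ≤ σ a := fun n a ↦ by
    induction n with
    | zero => simp [hzero]
    | succ n ih => exact succ_nsmul a n ▸ (hadd _ _).trans (sup_le ih le_rfl)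
  have hle : ∀ a b, 0 ≤ a → principalLIdeal a = principalLIdeal b → σ a ≤ σ b := by
    intro a b ha hab
    obtain ⟨n, hn⟩ := exists_le_nsmul_of_principalLIdeal_eq ha hab
    exact (OrderHomClass.mono σ hn).trans (hnsmul n b)
  have hfactors : (fun a : {a : F // 0 ≤ a} ↦ σ a.1).FactorsThrough
      fun a ↦ principalLIdeal a.1 := fun a b hab ↦
    le_antisymm (hle a b a.2 hab) (hle b a b.2 hab.symm)
  exact ⟨Function.extend (fun a : {a : F // 0 ≤ a} ↦ principalLIdeal a.1) (fun a ↦ σ a.1) ⊥,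
    fun a ha ↦ hfactors.extend_apply ⊥ ⟨a, ha⟩⟩

end PrincipalIdeal

lemma exists_surjective_of_mk_le_aleph_one {L : Type v} [Nonempty L]
    (hL : Cardinal.mk L ≤ Cardinal.aleph 1) :
    ∃ (ι : Type v) (_ : LinearOrder ι) (_ : WellFoundedLT ι) (l : ι → L),
      (∀ i : ι, (Set.Iio i).Countable) ∧ Function.Surjective l := by
  let ι := (Cardinal.aleph.{v} 1).ord.ToType
  obtain ⟨e⟩ : Nonempty (L ↪ ι) := by
    rw [← Cardinal.le_def]
    simpa [ι] using hL
  refine ⟨ι, inferInstance, inferInstance, Function.invFun e, fun i ↦ ?_,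
    Function.invFun_surjective e.injective⟩
  have hlt : Cardinal.mk (Set.Iio i) < Cardinal.aleph 1 := by
    simpa [ι] using Cardinal.mk_Iio_lt i (by simp [ι])
  exact Cardinal.le_aleph0_iff_set_countable.1
    (Order.lt_succ_iff.1 (hlt.trans_eq Cardinal.succ_aleph0.symm))

/-- every completely normal distributive `0`-lattice `L` with at most `ℵ₁`
elements is the image of a surjective lattice homomorphism from `Idc F` for some Abelian
`ℓ`-group `F`.  The surjective lattice homomorphism `Idc F ↠ L` is encoded by a map `g`
on sets of elements of `F`, applied to the principal `ℓ`-ideals `⟨a⟩` for `a ∈ F⁺`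
(every element of `Idc F` has this form, joins and meets in `Idc F` being `⟨a ⊔ b⟩`
and `⟨a ⊓ b⟩`). -/
theorem stmt1 (L : Type v) [DistribLattice L] [OrderBot L]
    (hcn : ∀ a b : L, ∃ x y : L, a ⊔ b = a ⊔ y ∧ a ⊔ b = x ⊔ b ∧ x ⊓ y = ⊥)
    (hcard : Cardinal.mk L ≤ Cardinal.aleph 1) :
    ∃ (F : AbelianLGroup.{v}) (g : Set F.carrier → L),
      (∀ l : L, ∃ a : F.carrier, 0 ≤ a ∧ g (principalLIdeal a) = l) ∧
      (∀ a b : F.carrier, 0 ≤ a → 0 ≤ b →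
        g (principalLIdeal (a ⊔ b)) = g (principalLIdeal a) ⊔ g (principalLIdeal b) ∧
        g (principalLIdeal (a ⊓ b)) = g (principalLIdeal a) ⊓ g (principalLIdeal b)) := by
  obtain ⟨ι, _, _, l, hι, hl⟩ := exists_surjective_of_mk_le_aleph_one hcard
  obtain ⟨μ, hμ, hμl⟩ := exists_isSignValuation_single hι hcn l
  obtain ⟨F, e, σ, hσ_zero, hσ_add, hσ⟩ := hμ.exists_abelianLGroup
  obtain ⟨g, hg⟩ := exists_forall_principalLIdeal_eq σ hσ_zero hσ_add
  refine ⟨F, g, fun x ↦ ?_, fun a b ha hb ↦ ⟨?_, ?_⟩⟩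
  · obtain ⟨i, rfl⟩ := hl x
    refine ⟨e (Finsupp.single i 1) ⊔ 0, le_sup_right, ?_⟩
    rw [hg _ le_sup_right, map_sup, hσ, hμl, hσ_zero, sup_bot_eq]
  · rw [hg a ha, hg b hb, hg _ (ha.trans le_sup_left), map_sup]
  · rw [hg a ha, hg b hb, hg _ (le_inf ha hb), map_inf]
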